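/- Let K ≥ 2, τ > 0, α ∈ ℝ^K with all α_i > 0, and β ∈ ℝ^K with all β_i > 0, and let X have the inverse Schlömilch distribution IS(α, β, τ). Then for all indices i, k, the log-ratio variance satisfies Var[log(X_i/X_k)] = (1/τ²)(1 − δ_{ik})[ψ'(α_i) + ψ'(α_k)], where ψ' is the trigamma function and δ is the Kronecker delta. -/

import Mathlib

open MeasureTheory Finset

noncomputable def fillMap (K : ℕ) (u : Fin (K - 1) → ℝ) : Fin K → ℝ :=
  fun i => if h : (i : ℕ) < K - 1 then u ⟨i, h⟩ else 1 - ∑ j, u j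

/-- The `(K-1)`-dimensional Lebesgue measure on the probability simplex `S_K`. -/
noncomputable def simplexMeasure (K : ℕ) : Measure (Fin K → ℝ) :=
  Measure.map (fillMap K)
    (volume.restrict {u : Fin (K - 1) → ℝ | (∀ j, 0 ≤ u j) ∧ ∑ j, u j ≤ 1})

/-- The density of the inverse Schlömilch distribution `IS(α, β, τ)` on the simplex. -/
noncomputable def isDensity (K : ℕ) (α β : Fin K → ℝ) (τ : ℝ) (x : Fin K → ℝ) : ℝ :=
  τ ^ (K - 1) * Real.Gamma (∑ i, α i) * (∑ j, β j / x j ^ τ) ^ (-(∑ i, α i)) *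
    ∏ i, β i ^ (α i) / (Real.Gamma (α i) * x i ^ (τ * α i + 1))

/-- The digamma function `ψ = Γ'/Γ`. -/
noncomputable def digamma (x : ℝ) : ℝ := deriv Real.Gamma x / Real.Gamma x

/-- The trigamma function `ψ'`, the derivative of the digamma function. -/
noncomputable def trigamma (x : ℝ) : ℝ := deriv digamma x

/-- Kronecker delta. -/
def kd {K : ℕ} (a b : Fin K) : ℝ := if a = b then 1 else 0

/-! `IS(α, β, τ)` is the law of `Y / ∑ j, Y j`, where `Y j = G j ^ (-τ⁻¹)` and the `G j` are
independent gamma variables with shapes `α j` and rates `β j`: in coordinates `Y = r • y` with `y`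
on the simplex, the joint density of `Y` times the Jacobian `r ^ (K - 1)` is the density of
`IS(α, β, τ)` at `y` times the density in `r` of a variable of the same kind as the `Y j`, with
shape `∑ j, α j` and rate `∑ j, β j / y j ^ τ`. Rescaling does not change ratios, so
`log (X i / X k)` is distributed as `-τ⁻¹ * (log (G i) - log (G k))`. Finally the cumulant
generating function of `log (G j)` is `t ↦ log (Γ (α j + t))` up to an affine function, so its
second derivative at `0`, the variance of `log (G j)`, is `ψ' (α j)`. -/

open ProbabilityTheory
open scoped ENNReal

section Trigamma

variable {x : ℝ}

lemma analyticAt_realGamma (hx : 0 < x) : AnalyticAt ℝ Real.Gamma x := by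
  have hΓ : AnalyticAt ℂ Complex.Gamma x := by
    refine DifferentiableOn.analyticAt (s := {z | 0 < z.re}) (fun z hz => ?_)
      ((isOpen_lt continuous_const Complex.continuous_re).mem_nhds (by simpa using hx))
    refine (Complex.differentiableAt_Gamma z fun m hm => ?_).differentiableWithinAt
    have : 0 < z.re := hz
    simp only [hm, Complex.neg_re, Complex.natCast_re, Left.neg_pos_iff] at this
    exact absurd this (Nat.cast_nonneg m).not_gt
  simpa only [Complex.Gamma_ofReal, Complex.ofReal_re] using hΓ.re_ofReal

lemma hasDerivAt_log_realGamma (hx : 0 < x) :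
    HasDerivAt (fun y => Real.log (Real.Gamma y)) (digamma x) x :=
  (analyticAt_realGamma hx).differentiableAt.hasDerivAt.log (Real.Gamma_pos_of_pos hx).ne'

lemma hasDerivAt_digamma (hx : 0 < x) : HasDerivAt digamma (trigamma x) x :=
  ((analyticAt_realGamma hx).deriv.differentiableAt.div
    (analyticAt_realGamma hx).differentiableAt (Real.Gamma_pos_of_pos hx).ne').hasDerivAt

end Trigamma

section LogGamma

variable {a r t : ℝ}

lemma ae_pos_gammaMeasure (a r : ℝ) : ∀ᵐ x ∂gammaMeasure a r, 0 < x := by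
  rw [gammaMeasure, ae_withDensity_iff (by unfold gammaPDF; fun_prop)]
  filter_upwards [Measure.ae_ne volume 0] with x hx0 hpdf
  exact hx0.lt_or_gt.resolve_left fun hneg => hpdf (gammaPDF_of_neg hneg)

lemma lintegral_exp_mul_log_gammaMeasure (ha : 0 < a) (hr : 0 < r) (hat : 0 < a + t) :
    ∫⁻ x, ENNReal.ofReal (Real.exp (t * Real.log x)) ∂gammaMeasure a r =
      ENNReal.ofReal (Real.Gamma (a + t) / (Real.Gamma a * r ^ t)) := by
  have htilt : ∀ᵐ x : ℝ, gammaPDF a r x * ENNReal.ofReal (Real.exp (t * Real.log x)) =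
      ENNReal.ofReal (Real.Gamma (a + t) / (Real.Gamma a * r ^ t)) * gammaPDF (a + t) r x := by
    filter_upwards [Measure.ae_ne volume 0] with x hx0
    obtain hneg | hpos := hx0.lt_or_gt
    · simp only [gammaPDF_of_neg hneg, zero_mul, mul_zero]
    have hΓ := (Real.Gamma_pos_of_pos hat).ne'
    rw [gammaPDF_of_nonneg hpos.le, gammaPDF_of_nonneg hpos.le,
      ← ENNReal.ofReal_mul (by positivity), ← ENNReal.ofReal_mul (by positivity),
      mul_comm t, ← Real.rpow_def_of_pos hpos, Real.rpow_add hr,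
      show a + t - 1 = a - 1 + t by ring, Real.rpow_add hpos]
    congr 1
    field_simp
  rw [gammaMeasure, lintegral_withDensity_eq_lintegral_mul _ (by unfold gammaPDF; fun_prop)
    (by fun_prop)]
  simp only [Pi.mul_apply]
  rw [lintegral_congr_ae htilt, lintegral_const_mul _ (by unfold gammaPDF; fun_prop),
    lintegral_gammaPDF_eq_one hat hr, mul_one]

lemma integrable_exp_mul_log_gammaMeasure (ha : 0 < a) (hr : 0 < r) (hat : 0 < a + t) :
    Integrable (fun x => Real.exp (t * Real.log x)) (gammaMeasure a r) := by
  refine ⟨by fun_prop, ?_⟩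
  rw [hasFiniteIntegral_iff_ofReal (.of_forall fun _ => (Real.exp_pos _).le),
    lintegral_exp_mul_log_gammaMeasure ha hr hat]
  exact ENNReal.ofReal_lt_top

lemma mgf_log_gammaMeasure (ha : 0 < a) (hr : 0 < r) (hat : 0 < a + t) :
    mgf Real.log (gammaMeasure a r) t = Real.Gamma (a + t) / (Real.Gamma a * r ^ t) := by
  rw [mgf, integral_eq_lintegral_of_nonneg_ae (.of_forall fun _ => (Real.exp_pos _).le)
    (by fun_prop), lintegral_exp_mul_log_gammaMeasure ha hr hat, ENNReal.toReal_ofReal]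
  positivity

lemma cgf_log_gammaMeasure (ha : 0 < a) (hr : 0 < r) (hat : 0 < a + t) :
    cgf Real.log (gammaMeasure a r) t =
      Real.log (Real.Gamma (a + t)) - Real.log (Real.Gamma a) - t * Real.log r := by
  have hΓ := (Real.Gamma_pos_of_pos ha).ne'
  have hrt := (Real.rpow_pos_of_pos hr t).ne'
  rw [cgf, mgf_log_gammaMeasure ha hr hat, Real.log_div (Real.Gamma_pos_of_pos hat).ne'
    (mul_ne_zero hΓ hrt), Real.log_mul hΓ hrt, Real.log_rpow hr, sub_sub]

lemma eventually_add_pos (ha : 0 < a) : ∀ᶠ t in nhds 0, 0 < a + t :=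
  (continuous_const_add a).continuousAt.eventually_const_lt (by simpa using ha)

lemma zero_mem_interior_integrableExpSet_log_gammaMeasure (ha : 0 < a) (hr : 0 < r) :
    0 ∈ interior (integrableExpSet Real.log (gammaMeasure a r)) := by
  rw [mem_interior_iff_mem_nhds]
  filter_upwards [eventually_add_pos ha] with t hat
  exact integrable_exp_mul_log_gammaMeasure ha hr hat

lemma memLp_log_gammaMeasure (ha : 0 < a) (hr : 0 < r) (p : NNReal) :
    MemLp Real.log p (gammaMeasure a r) :=
  memLp_of_mem_interior_integrableExpSet
    (zero_mem_interior_integrableExpSet_log_gammaMeasure ha hr) p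

theorem variance_log_gammaMeasure (ha : 0 < a) (hr : 0 < r) :
    Var[Real.log; gammaMeasure a r] = trigamma a := by
  have := isProbabilityMeasure_gammaMeasure ha hr
  have hderiv : deriv (cgf Real.log (gammaMeasure a r)) =ᶠ[nhds 0]
      fun t => digamma (a + t) - Real.log r := by
    filter_upwards [(eventually_add_pos ha).eventually_nhds] with t hat
    have hcgf : cgf Real.log (gammaMeasure a r) =ᶠ[nhds t] fun t =>
        Real.log (Real.Gamma (a + t)) - Real.log (Real.Gamma a) - t * Real.log r := by
      filter_upwards [hat] with s has using cgf_log_gammaMeasure ha hr has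
    rw [hcgf.deriv_eq]
    have hlogΓ := (hasDerivAt_log_realGamma hat.self_of_nhds).comp_const_add a t
    simpa only [one_mul] using
      ((hlogΓ.sub_const _).fun_sub ((hasDerivAt_id' t).mul_const (Real.log r))).deriv
  have hdigamma : HasDerivAt (fun t => digamma (a + t)) (trigamma a) 0 :=
    .comp_const_add a 0 (by simpa only [add_zero] using hasDerivAt_digamma ha)
  calc Var[Real.log; gammaMeasure a r]
      = iteratedDeriv 2 (cgf Real.log (gammaMeasure a r)) 0 := by
        simpa using variance_tilted_mul
          (zero_mem_interior_integrableExpSet_log_gammaMeasure ha hr)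
    _ = trigamma a := by
        rw [iteratedDeriv_succ, iteratedDeriv_one, hderiv.deriv_eq]
        exact (hdigamma.sub_const _).deriv

variable {ι : Type*} [Fintype ι] {α β : ι → ℝ}

lemma memLp_log_eval_pi_gammaMeasure (hα : ∀ i, 0 < α i) (hβ : ∀ i, 0 < β i) (i : ι)
    (p : NNReal) :
    MemLp (fun g : ι → ℝ => Real.log (g i)) p
      (Measure.pi fun i => gammaMeasure (α i) (β i)) := by
  have := fun i => isProbabilityMeasure_gammaMeasure (hα i) (hβ i)
  exact (memLp_log_gammaMeasure (hα i) (hβ i) p).comp_measurePreserving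
    (measurePreserving_eval _ i)

lemma variance_log_eval_pi_gammaMeasure (hα : ∀ i, 0 < α i) (hβ : ∀ i, 0 < β i) (i : ι) :
    Var[fun g : ι → ℝ => Real.log (g i); Measure.pi fun i => gammaMeasure (α i) (β i)] =
      trigamma (α i) := by
  have := fun i => isProbabilityMeasure_gammaMeasure (hα i) (hβ i)
  have heval := measurePreserving_eval (fun i => gammaMeasure (α i) (β i)) i
  rw [← variance_log_gammaMeasure (hα i) (hβ i), ← heval.map_eq,
    variance_map (by fun_prop) heval.aemeasurable]
  rfl

lemma variance_log_sub_log_pi_gammaMeasure (hα : ∀ i, 0 < α i) (hβ : ∀ i, 0 < β i) {i k : ι}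
    (hik : i ≠ k) :
    Var[fun g : ι → ℝ => Real.log (g i) - Real.log (g k);
        Measure.pi fun i => gammaMeasure (α i) (β i)] = trigamma (α i) + trigamma (α k) := by
  have := fun i => isProbabilityMeasure_gammaMeasure (hα i) (hβ i)
  have hmem (j : ι) := memLp_log_eval_pi_gammaMeasure hα hβ j 2
  have hindep := (iIndepFun_pi (μ := fun i => gammaMeasure (α i) (β i))
    (X := fun _ => Real.log) fun _ => by fun_prop).indepFun hik
  rw [variance_fun_sub (hmem i) (hmem k), hindep.covariance_eq_zero (hmem i) (hmem k),
    variance_log_eval_pi_gammaMeasure hα hβ, variance_log_eval_pi_gammaMeasure hα hβ,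
    mul_zero, sub_zero]

end LogGamma

section InvGenGamma

lemma lintegral_comp_rpow_Ioi (f : ℝ → ℝ≥0∞) {p : ℝ} (hp : p ≠ 0) :
    ∫⁻ x in Set.Ioi 0, ENNReal.ofReal (|p| * x ^ (p - 1)) * f (x ^ p) =
      ∫⁻ y in Set.Ioi 0, f y := by
  have himage : (· ^ p) '' Set.Ioi (0 : ℝ) = Set.Ioi 0 := by
    refine Set.Subset.antisymm (Set.image_subset_iff.2 fun x hx => Real.rpow_pos_of_pos hx p) ?_
    exact fun y hy => ⟨y ^ p⁻¹, Real.rpow_pos_of_pos hy _, Real.rpow_inv_rpow (le_of_lt hy) hp⟩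
  have hsubst := lintegral_image_eq_lintegral_abs_deriv_mul measurableSet_Ioi
    (fun x hx => (Real.hasDerivAt_rpow_const (.inl (ne_of_gt hx))).hasDerivWithinAt)
    ((Real.rpow_left_injOn hp).mono Set.Ioi_subset_Ici_self) f
  rw [himage] at hsubst
  rw [hsubst]
  refine setLIntegral_congr_fun measurableSet_Ioi fun x hx => ?_
  rw [abs_mul, abs_of_nonneg (Real.rpow_nonneg (le_of_lt hx) _)]

/-- The density of `G ^ (-τ⁻¹)` for `G` gamma distributed with shape `a` and rate `b`: the inverse
generalized gamma density. -/
noncomputable def invGenGammaPDFReal (τ a b x : ℝ) : ℝ :=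
  if 0 < x then τ * b ^ a / (Real.Gamma a * x ^ (τ * a + 1)) * Real.exp (-(b / x ^ τ)) else 0

variable {τ a b x : ℝ}

lemma invGenGammaPDFReal_of_nonpos (hx : x ≤ 0) : invGenGammaPDFReal τ a b x = 0 :=
  if_neg hx.not_gt

@[fun_prop]
lemma measurable_invGenGammaPDFReal : Measurable (invGenGammaPDFReal τ a b) :=
  .ite measurableSet_Ioi (by fun_prop) measurable_const

lemma invGenGammaPDFReal_nonneg (hτ : 0 < τ) (ha : 0 < a) (hb : 0 < b) (x : ℝ) :
    0 ≤ invGenGammaPDFReal τ a b x := by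
  unfold invGenGammaPDFReal
  split_ifs <;> positivity

lemma invGenGammaPDFReal_eq_gammaPDFReal (hx : 0 < x) :
    invGenGammaPDFReal τ a b x = τ * x ^ (-τ - 1) * gammaPDFReal a b (x ^ (-τ)) := by
  have hexp : x ^ (-τ - 1) * (x ^ (-τ)) ^ (a - 1) = (x ^ (τ * a + 1))⁻¹ := by
    rw [← Real.rpow_mul hx.le, ← Real.rpow_add hx, ← Real.rpow_neg hx.le]
    ring_nf
  rw [invGenGammaPDFReal, gammaPDFReal, if_pos hx, if_pos (by positivity), Real.rpow_neg hx.le τ,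
    ← div_eq_mul_inv b, ← Real.rpow_neg hx.le τ]
  calc τ * b ^ a / (Real.Gamma a * x ^ (τ * a + 1)) * Real.exp (-(b / x ^ τ))
      = τ * (b ^ a / Real.Gamma a) * (x ^ (τ * a + 1))⁻¹ * Real.exp (-(b / x ^ τ)) := by
        rw [← div_div]; ring
    _ = _ := by rw [← hexp]; ring

lemma setLIntegral_Ioi_invGenGammaPDFReal_mul (f : ℝ → ℝ≥0∞) :
    ∫⁻ x in Set.Ioi 0, ENNReal.ofReal (invGenGammaPDFReal τ a b x) * f x =
      ∫⁻ x, ENNReal.ofReal (invGenGammaPDFReal τ a b x) * f x := by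
  refine setLIntegral_eq_of_support_subset fun x hx => ?_
  by_contra hx0
  exact hx (by simp only [invGenGammaPDFReal_of_nonpos (not_lt.1 hx0), ENNReal.ofReal_zero,
    zero_mul])

lemma map_rpow_gammaMeasure (hτ : 0 < τ) :
    (gammaMeasure a b).map (· ^ (-τ⁻¹)) =
      volume.withDensity fun x => ENNReal.ofReal (invGenGammaPDFReal τ a b x) := by
  have hgamma : Measurable (gammaPDF a b) := by unfold gammaPDF; fun_prop
  refine Measure.ext_of_lintegral _ fun f hf => ?_
  calc ∫⁻ x, f x ∂(gammaMeasure a b).map (· ^ (-τ⁻¹))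
      = ∫⁻ x in Set.Ioi 0, f (x ^ (-τ⁻¹)) ∂gammaMeasure a b := by
        rw [lintegral_map hf (by fun_prop),
          Measure.restrict_eq_self_of_ae_mem (s := Set.Ioi 0) (ae_pos_gammaMeasure a b)]
    _ = ∫⁻ x in Set.Ioi 0, gammaPDF a b x * f (x ^ (-τ⁻¹)) :=
        setLIntegral_withDensity_eq_setLIntegral_mul _ hgamma (by fun_prop) measurableSet_Ioi
    _ = ∫⁻ x in Set.Ioi 0, ENNReal.ofReal (invGenGammaPDFReal τ a b x) * f x := by
        rw [← lintegral_comp_rpow_Ioi _ (neg_ne_zero.2 hτ.ne')]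
        refine setLIntegral_congr_fun measurableSet_Ioi fun x hx => ?_
        have hx0 : 0 < x := hx
        have hinv : (x ^ (-τ)) ^ (-τ⁻¹) = x := by
          rw [← inv_neg, Real.rpow_rpow_inv hx0.le (neg_ne_zero.2 hτ.ne')]
        rw [hinv, abs_neg, abs_of_pos hτ, ← mul_assoc, gammaPDF,
          ← ENNReal.ofReal_mul (by positivity), invGenGammaPDFReal_eq_gammaPDFReal hx0]
    _ = ∫⁻ x, f x ∂volume.withDensity fun x => ENNReal.ofReal (invGenGammaPDFReal τ a b x) := by
        rw [setLIntegral_Ioi_invGenGammaPDFReal_mul,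
          lintegral_withDensity_eq_lintegral_mul _ (by fun_prop) hf]
        rfl

lemma lintegral_invGenGammaPDFReal (hτ : 0 < τ) (ha : 0 < a) (hb : 0 < b) :
    ∫⁻ x, ENNReal.ofReal (invGenGammaPDFReal τ a b x) = 1 := by
  have := isProbabilityMeasure_gammaMeasure ha hb
  rw [← setLIntegral_univ, ← withDensity_apply _ .univ, ← map_rpow_gammaMeasure hτ]
  exact (Measure.isProbabilityMeasure_map (by fun_prop)).measure_univ

lemma integrable_invGenGammaPDFReal (hτ : 0 < τ) (ha : 0 < a) (hb : 0 < b) :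
    Integrable (invGenGammaPDFReal τ a b) := by
  refine ⟨by fun_prop, ?_⟩
  rw [hasFiniteIntegral_iff_ofReal (.of_forall (invGenGammaPDFReal_nonneg hτ ha hb)),
    lintegral_invGenGammaPDFReal hτ ha hb]
  exact ENNReal.one_lt_top

end InvGenGamma

lemma pi_withDensity_ofReal {ι : Type*} [Fintype ι] {X : ι → Type*} [∀ i, MeasurableSpace (X i)]
    {μ : ∀ i, Measure (X i)} [∀ i, SigmaFinite (μ i)] {f : ∀ i, X i → ℝ}
    (hf : ∀ i, Integrable (f i) (μ i)) (hf0 : ∀ i x, 0 ≤ f i x) :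
    Measure.pi (fun i => (μ i).withDensity fun x => ENNReal.ofReal (f i x)) =
      (Measure.pi μ).withDensity fun x => ENNReal.ofReal (∏ i, f i (x i)) := by
  refine Measure.pi_eq fun s hs => ?_
  have hfs i : Integrable (f i) ((μ i).restrict (s i)) := (hf i).restrict
  rw [withDensity_apply _ (.univ_pi hs), Measure.restrict_pi_pi,
    ← ofReal_integral_eq_lintegral_ofReal (.fintype_prod_dep hfs)
      (.of_forall fun x => prod_nonneg fun i _ => hf0 i (x i)),
    integral_fintype_prod_eq_prod, ENNReal.ofReal_prod_of_nonneg fun i _ => integral_nonneg (hf0 i)]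
  refine prod_congr rfl fun i _ => ?_
  rw [withDensity_apply _ (hs i),
    ofReal_integral_eq_lintegral_ofReal (hfs i) (.of_forall (hf0 i))]

section SimplexPolar

variable {n : ℕ}

lemma fillMap_castSucc (u : Fin n → ℝ) (j : Fin n) : fillMap (n + 1) u j.castSucc = u j := by
  simp [fillMap]

lemma fillMap_last (u : Fin n → ℝ) : fillMap (n + 1) u (Fin.last n) = 1 - ∑ j, u j := by
  simp [fillMap]

@[fun_prop]
lemma measurable_fillMap : Measurable (fillMap (n + 1)) := by
  refine measurable_pi_iff.2 (Fin.forall_fin_succ'.2 ⟨fun j => ?_, ?_⟩)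
  · simp only [fillMap_castSucc]
    exact measurable_pi_apply j
  · simp only [fillMap_last]
    fun_prop

lemma sum_fillMap (u : Fin n → ℝ) : ∑ j, fillMap (n + 1) u j = 1 := by
  simp only [Fin.sum_univ_castSucc, fillMap_castSucc, fillMap_last, add_sub_cancel]

lemma simplexMeasure_eq_restrict (n : ℕ) :
    simplexMeasure (n + 1) = (volume.map (fillMap (n + 1))).restrict (Set.Ici 0) := by
  have hpreimage : fillMap (n + 1) ⁻¹' Set.Ici 0 = {u | (∀ j, 0 ≤ u j) ∧ ∑ j, u j ≤ 1} := by
    ext u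
    simp only [Set.mem_preimage, Set.mem_Ici, Pi.le_def, Pi.zero_apply, Fin.forall_fin_succ',
      fillMap_castSucc, fillMap_last, sub_nonneg, Set.mem_ofPred_eq]
    rfl
  rw [Measure.restrict_map measurable_fillMap measurableSet_Ici, hpreimage]
  rfl

lemma ae_mem_stdSimplex : ∀ᵐ y ∂simplexMeasure (n + 1), y ∈ stdSimplex ℝ (Fin (n + 1)) := by
  have hsum : ∀ᵐ y ∂volume.map (fillMap (n + 1)), ∑ j, y j = 1 :=
    (ae_map_iff (by fun_prop) (measurableSet_eq_fun (by fun_prop) (by fun_prop))).2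
      (.of_forall sum_fillMap)
  rw [simplexMeasure_eq_restrict]
  filter_upwards [ae_restrict_mem measurableSet_Ici, ae_restrict_of_ae hsum] with y hy0 hy1
  exact ⟨hy0, hy1⟩

@[fun_prop]
lemma measurable_finSnoc :
    Measurable fun p : (Fin n → ℝ) × ℝ => (Fin.snoc p.1 p.2 : Fin (n + 1) → ℝ) := by
  refine measurable_pi_iff.2 (Fin.forall_fin_succ'.2 ⟨fun j => ?_, ?_⟩)
  · simp only [Fin.snoc_castSucc]
    fun_prop
  · simpa only [Fin.snoc_last] using measurable_snd

lemma lintegral_eq_lintegral_finSnoc_sub_sum {F : (Fin (n + 1) → ℝ) → ℝ≥0∞} (hF : Measurable F) :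
    ∫⁻ x, F x = ∫⁻ r : ℝ, ∫⁻ v : Fin n → ℝ, F (Fin.snoc v (r - ∑ j, v j)) := by
  have hsplit := (volume_preserving_piFinSuccAbove (fun _ : Fin (n + 1) => ℝ) (Fin.last n)).symm
  calc ∫⁻ x, F x = ∫⁻ p : ℝ × (Fin n → ℝ), F (Fin.snoc p.2 p.1) := by
        rw [← hsplit.lintegral_comp hF]
        refine lintegral_congr fun p => congrArg F ?_
        exact Fin.insertNth_last' p.1 p.2
    _ = ∫⁻ v : Fin n → ℝ, ∫⁻ z : ℝ, F (Fin.snoc v z) := by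
        rw [Measure.volume_eq_prod, lintegral_prod_symm _ (by fun_prop)]
    _ = ∫⁻ v : Fin n → ℝ, ∫⁻ r : ℝ, F (Fin.snoc v (r - ∑ j, v j)) :=
        lintegral_congr fun v =>
          (lintegral_sub_right_eq_self (fun z => F (Fin.snoc v z)) (∑ j, v j)).symm
    _ = ∫⁻ r : ℝ, ∫⁻ v : Fin n → ℝ, F (Fin.snoc v (r - ∑ j, v j)) :=
        lintegral_lintegral_swap (by fun_prop)

lemma lintegral_eq_pow_mul_lintegral_comp_smul {G : (Fin n → ℝ) → ℝ≥0∞} (hG : Measurable G)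
    {r : ℝ} (hr : 0 < r) : ∫⁻ v, G v = ENNReal.ofReal (r ^ n) * ∫⁻ u, G (r • u) := by
  have hscale := Measure.map_addHaar_smul (volume : Measure (Fin n → ℝ)) hr.ne'
  rw [← lintegral_map (f := G) hG (measurable_const_smul r), hscale, lintegral_smul_measure,
    smul_eq_mul, ← mul_assoc, ← ENNReal.ofReal_mul (by positivity), abs_of_pos (by positivity),
    Module.finrank_fin_fun, mul_inv_cancel₀ (by positivity), ENNReal.ofReal_one, one_mul]

lemma smul_fillMap (r : ℝ) (u : Fin n → ℝ) :
    r • fillMap (n + 1) u = Fin.snoc (r • u) (r - ∑ j, (r • u) j) := by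
  refine funext (Fin.forall_fin_succ'.2 ⟨fun j => ?_, ?_⟩)
  · simp only [Pi.smul_apply, fillMap_castSucc, Fin.snoc_castSucc]
  · simp only [Pi.smul_apply, fillMap_last, Fin.snoc_last, smul_eq_mul, mul_sub, mul_one, mul_sum]

lemma setLIntegral_Ici_eq_setLIntegral_finSnoc {F : (Fin (n + 1) → ℝ) → ℝ≥0∞}
    (hF : Measurable F) :
    ∫⁻ x in Set.Ici 0, F x = ∫⁻ r in Set.Ioi (0 : ℝ), ∫⁻ v : Fin n → ℝ,
      (Set.Ici 0).indicator F (Fin.snoc v (r - ∑ j, v j)) := by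
  rw [← lintegral_indicator measurableSet_Ici,
    lintegral_eq_lintegral_finSnoc_sub_sum (hF.indicator measurableSet_Ici),
    setLIntegral_congr Ioi_ae_eq_Ici, setLIntegral_eq_of_support_subset]
  intro r hr
  by_contra hneg
  refine hr ((lintegral_congr fun v => Set.indicator_of_notMem (fun hv => ?_) F).trans
    lintegral_zero)
  refine hneg (Set.mem_Ici.2 ?_)
  have hsum : 0 ≤ ∑ j, (Fin.snoc v (r - ∑ j, v j) : Fin (n + 1) → ℝ) j :=
    sum_nonneg fun j (_ : j ∈ univ) => hv j
  simpa only [Fin.sum_univ_castSucc, Fin.snoc_castSucc, Fin.snoc_last, add_sub_cancel] using hsum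

lemma setLIntegral_Ioi_mul_indicator_Ici_smul {ι : Type*} (c : ℝ → ℝ≥0∞) (F : (ι → ℝ) → ℝ≥0∞)
    (y : ι → ℝ) :
    ∫⁻ r in Set.Ioi 0, c r * (Set.Ici 0).indicator F (r • y) =
      (Set.Ici 0).indicator (fun y => ∫⁻ r in Set.Ioi 0, c r * F (r • y)) y := by
  have hmem {r : ℝ} (hr : 0 < r) : r • y ∈ Set.Ici 0 ↔ y ∈ Set.Ici 0 := by
    simpa only [Set.mem_Ici] using smul_nonneg_iff_nonneg_of_pos_left hr
  by_cases hy : y ∈ Set.Ici 0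
  · rw [Set.indicator_of_mem hy]
    refine setLIntegral_congr_fun measurableSet_Ioi fun r hr => ?_
    simp only [Set.indicator_of_mem ((hmem hr).2 hy)]
  · rw [Set.indicator_of_notMem hy]
    refine (setLIntegral_congr_fun measurableSet_Ioi fun r hr => ?_).trans lintegral_zero
    simp only [Set.indicator_of_notMem (mt (hmem hr).1 hy), mul_zero]

theorem setLIntegral_Ici_eq_lintegral_simplexMeasure {F : (Fin (n + 1) → ℝ) → ℝ≥0∞}
    (hF : Measurable F) :
    ∫⁻ x in Set.Ici 0, F x = ∫⁻ y, (∫⁻ r in Set.Ioi (0 : ℝ),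
      ENNReal.ofReal (r ^ n) * F (r • y)) ∂simplexMeasure (n + 1) := by
  set F₀ := (Set.Ici 0).indicator F
  have hF₀_meas : Measurable F₀ := hF.indicator measurableSet_Ici
  have hjoint : Measurable fun p : (Fin (n + 1) → ℝ) × ℝ =>
      ENNReal.ofReal (p.2 ^ n) * F₀ (p.2 • p.1) := by fun_prop
  calc ∫⁻ x in Set.Ici 0, F x
      = ∫⁻ r in Set.Ioi (0 : ℝ), ∫⁻ v : Fin n → ℝ, F₀ (Fin.snoc v (r - ∑ j, v j)) :=
        setLIntegral_Ici_eq_setLIntegral_finSnoc hF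
    _ = ∫⁻ r in Set.Ioi (0 : ℝ), ∫⁻ u : Fin n → ℝ,
          ENNReal.ofReal (r ^ n) * F₀ (r • fillMap (n + 1) u) := by
        refine setLIntegral_congr_fun measurableSet_Ioi fun r hr => ?_
        rw [lintegral_const_mul _ (by fun_prop),
          lintegral_eq_pow_mul_lintegral_comp_smul (by fun_prop) hr]
        simp only [smul_fillMap]
    _ = ∫⁻ u : Fin n → ℝ, ∫⁻ r in Set.Ioi (0 : ℝ),
          ENNReal.ofReal (r ^ n) * F₀ (r • fillMap (n + 1) u) :=
        lintegral_lintegral_swap (by fun_prop)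
    _ = ∫⁻ y, (∫⁻ r in Set.Ioi (0 : ℝ), ENNReal.ofReal (r ^ n) * F₀ (r • y))
          ∂volume.map (fillMap (n + 1)) :=
        (lintegral_map hjoint.lintegral_prod_right' measurable_fillMap).symm
    _ = ∫⁻ y, (∫⁻ r in Set.Ioi (0 : ℝ), ENNReal.ofReal (r ^ n) * F (r • y))
          ∂simplexMeasure (n + 1) := by
        rw [simplexMeasure_eq_restrict, ← lintegral_indicator measurableSet_Ici]
        exact lintegral_congr fun y => setLIntegral_Ioi_mul_indicator_Ici_smul _ F y

/-- The closure operation of compositional data analysis: rescaling a vector of positive parts to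
total `1`. -/
noncomputable def simplexClosure {K : ℕ} (x : Fin K → ℝ) : Fin K → ℝ := (∑ j, x j)⁻¹ • x

@[fun_prop]
lemma measurable_simplexClosure {K : ℕ} : Measurable (simplexClosure (K := K)) := by
  unfold simplexClosure
  fun_prop

lemma simplexClosure_smul {r : ℝ} (hr : r ≠ 0) {y : Fin n → ℝ}
    (hy : ∑ j, y j = 1) : simplexClosure (r • y) = y := by
  simp only [simplexClosure, Pi.smul_apply, smul_eq_mul, ← mul_sum, hy, mul_one,
    inv_smul_smul₀ hr]

theorem map_simplexClosure_withDensity {p : (Fin (n + 1) → ℝ) → ℝ≥0∞} (hp : Measurable p)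
    (hp_support : p.support ⊆ Set.Ici 0) :
    (volume.withDensity p).map simplexClosure = (simplexMeasure (n + 1)).withDensity
      fun y => ∫⁻ r in Set.Ioi (0 : ℝ), ENNReal.ofReal (r ^ n) * p (r • y) := by
  have hjoint : Measurable fun q : (Fin (n + 1) → ℝ) × ℝ =>
      ENNReal.ofReal (q.2 ^ n) * p (q.2 • q.1) := by fun_prop
  have hradial : Measurable fun y => ∫⁻ r in Set.Ioi (0 : ℝ), ENNReal.ofReal (r ^ n) * p (r • y) :=
    hjoint.lintegral_prod_right'
  refine Measure.ext_of_lintegral _ fun f hf => ?_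
  calc ∫⁻ x, f x ∂(volume.withDensity p).map simplexClosure
      = ∫⁻ x in Set.Ici 0, p x * f (simplexClosure x) := by
        rw [lintegral_map hf measurable_simplexClosure,
          lintegral_withDensity_eq_lintegral_mul _ hp (by fun_prop),
          setLIntegral_eq_of_support_subset fun x hx => hp_support (left_ne_zero_of_mul hx)]
        rfl
    _ = ∫⁻ y, (∫⁻ r in Set.Ioi (0 : ℝ), ENNReal.ofReal (r ^ n) *
          (p (r • y) * f (simplexClosure (r • y)))) ∂simplexMeasure (n + 1) :=
        setLIntegral_Ici_eq_lintegral_simplexMeasure (by fun_prop)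
    _ = ∫⁻ y, (∫⁻ r in Set.Ioi (0 : ℝ), ENNReal.ofReal (r ^ n) * p (r • y)) * f y
          ∂simplexMeasure (n + 1) := by
        refine lintegral_congr_ae ?_
        filter_upwards [ae_mem_stdSimplex] with y hy
        rw [← lintegral_mul_const _ (by fun_prop)]
        refine setLIntegral_congr_fun measurableSet_Ioi fun r hr => ?_
        rw [simplexClosure_smul (ne_of_gt hr) hy.2, mul_assoc]
    _ = _ := (lintegral_withDensity_eq_lintegral_mul _ hradial hf).symm

end SimplexPolar

section InverseSchlomilch

/-- The inverse Schlömilch distribution `IS(α, β, τ)` as a measure on `ℝ^K` carried by the simplex,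
so that the library's variance and identity in distribution apply to it. -/
noncomputable def inverseSchlomilchMeasure (K : ℕ) (α β : Fin K → ℝ) (τ : ℝ) :
    Measure (Fin K → ℝ) :=
  (simplexMeasure K).withDensity fun x => ENNReal.ofReal (isDensity K α β τ x)

@[fun_prop]
lemma measurable_isDensity {K : ℕ} {α β : Fin K → ℝ} {τ : ℝ} : Measurable (isDensity K α β τ) := by
  unfold isDensity
  fun_prop

variable {n : ℕ} {α β y : Fin (n + 1) → ℝ} {τ r : ℝ}

lemma isDensity_nonneg (hτ : 0 < τ) (hα : ∀ j, 0 < α j) (hβ : ∀ j, 0 < β j) (hy : 0 ≤ y) :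
    0 ≤ isDensity (n + 1) α β τ y := by
  have hy (j) : 0 ≤ y j := hy j
  have hsum : 0 < ∑ j, α j := sum_pos (fun j _ => hα j) univ_nonempty
  have hS : 0 ≤ ∑ j, β j / y j ^ τ := sum_nonneg fun j _ => by
    have := hy j; have := hβ j; positivity
  have hprod : 0 ≤ ∏ j, β j ^ α j / (Real.Gamma (α j) * y j ^ (τ * α j + 1)) :=
    prod_nonneg fun j _ => by
      have := hy j; have := hβ j; have := hα j; positivity
  unfold isDensity
  positivity

-- On the boundary the factor with `x_j = 0` is `β ^ α / 0`, which is the junk value `0`.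
lemma isDensity_eq_zero (hτ : 0 < τ) (hα : ∀ j, 0 < α j) {j : Fin (n + 1)} (hj : y j = 0) :
    isDensity (n + 1) α β τ y = 0 := by
  have := hα j
  refine mul_eq_zero_of_right _ (prod_eq_zero (mem_univ j) ?_)
  rw [hj, Real.zero_rpow (by positivity), mul_zero, div_zero]

lemma invGenGammaPDFReal_mul {a b x : ℝ} (hx : 0 < x) (hr : 0 < r) :
    invGenGammaPDFReal τ a b (r * x) = τ * (r ^ (τ * a + 1))⁻¹ *
      (b ^ a / (Real.Gamma a * x ^ (τ * a + 1))) * Real.exp (-(b / x ^ τ / r ^ τ)) := by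
  rw [invGenGammaPDFReal, if_pos (mul_pos hr hx), Real.mul_rpow hr.le hx.le,
    Real.mul_rpow hr.le hx.le, mul_comm (r ^ τ), ← div_div b]
  congr 1
  simp only [div_eq_mul_inv, mul_inv]
  ring

lemma prod_rpow_add_one (hr : 0 < r) :
    ∏ j, r ^ (τ * α j + 1) = r ^ n * r ^ (τ * ∑ j, α j + 1) := by
  rw [← Real.rpow_sum_of_pos hr, ← Real.rpow_natCast, ← Real.rpow_add hr]
  simp only [sum_add_distrib, mul_sum, sum_const, card_univ, Fintype.card_fin, nsmul_eq_mul,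
    mul_one]
  push_cast
  ring_nf

theorem pow_mul_prod_invGenGammaPDFReal_smul (hτ : 0 < τ) (hα : ∀ j, 0 < α j)
    (hβ : ∀ j, 0 < β j) (hy : 0 ≤ y) (hr : 0 < r) :
    r ^ n * ∏ j, invGenGammaPDFReal τ (α j) (β j) ((r • y) j) =
      isDensity (n + 1) α β τ y *
        invGenGammaPDFReal τ (∑ j, α j) (∑ j, β j / y j ^ τ) r := by
  by_cases hzero : ∃ j, y j = 0
  · obtain ⟨j, hj⟩ := hzero
    rw [isDensity_eq_zero hτ hα hj, zero_mul, prod_eq_zero (mem_univ j), mul_zero]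
    exact invGenGammaPDFReal_of_nonpos (by simp [hj])
  have hypos (j) : 0 < y j := (hy j).lt_of_ne fun hj => hzero ⟨j, hj.symm⟩
  have hsum : 0 < ∑ j, α j := sum_pos (fun j _ => hα j) univ_nonempty
  have hS : 0 < ∑ j, β j / y j ^ τ :=
    sum_pos (fun j _ => div_pos (hβ j) (Real.rpow_pos_of_pos (hypos j) τ)) univ_nonempty
  simp only [Pi.smul_apply, smul_eq_mul, invGenGammaPDFReal_mul (hypos _) hr, prod_mul_distrib,
    prod_const, card_univ, Fintype.card_fin, prod_inv_distrib, prod_rpow_add_one hr,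
    ← Real.exp_sum, sum_neg_distrib, ← sum_div]
  rw [isDensity, invGenGammaPDFReal, if_pos hr, Real.rpow_neg hS.le, Nat.add_sub_cancel]
  have hΓ := (Real.Gamma_pos_of_pos hsum).ne'
  have hSpow := (Real.rpow_pos_of_pos hS (∑ j, α j)).ne'
  have hrpow := (Real.rpow_pos_of_pos hr (τ * ∑ j, α j + 1)).ne'
  field_simp
  ring

lemma lintegral_pow_mul_prod_invGenGammaPDFReal_smul (hτ : 0 < τ) (hα : ∀ j, 0 < α j)
    (hβ : ∀ j, 0 < β j) (hy : y ∈ stdSimplex ℝ (Fin (n + 1))) :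
    ∫⁻ r in Set.Ioi 0, ENNReal.ofReal (r ^ n) *
        ENNReal.ofReal (∏ j, invGenGammaPDFReal τ (α j) (β j) ((r • y) j)) =
      ENNReal.ofReal (isDensity (n + 1) α β τ y) := by
  have hsum : 0 < ∑ j, α j := sum_pos (fun j _ => hα j) univ_nonempty
  have hS : 0 < ∑ j, β j / y j ^ τ := by
    obtain ⟨j, -, hj⟩ := exists_ne_zero_of_sum_ne_zero (hy.2.trans_ne one_ne_zero)
    refine sum_pos' (fun j _ => div_nonneg (hβ j).le (Real.rpow_nonneg (hy.1 j) τ))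
      ⟨j, mem_univ j, div_pos (hβ j) (Real.rpow_pos_of_pos ((hy.1 j).lt_of_ne' hj) τ)⟩
  calc ∫⁻ r in Set.Ioi 0, ENNReal.ofReal (r ^ n) *
        ENNReal.ofReal (∏ j, invGenGammaPDFReal τ (α j) (β j) ((r • y) j))
      = ∫⁻ r in Set.Ioi 0,
          ENNReal.ofReal (invGenGammaPDFReal τ (∑ j, α j) (∑ j, β j / y j ^ τ) r) *
            ENNReal.ofReal (isDensity (n + 1) α β τ y) := by
        refine setLIntegral_congr_fun measurableSet_Ioi fun r hr => ?_
        rw [← ENNReal.ofReal_mul (pow_nonneg (le_of_lt hr) n),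
          pow_mul_prod_invGenGammaPDFReal_smul hτ hα hβ hy.1 hr,
          ENNReal.ofReal_mul (isDensity_nonneg hτ hα hβ hy.1), mul_comm]
    _ = ENNReal.ofReal (isDensity (n + 1) α β τ y) := by
        rw [setLIntegral_Ioi_invGenGammaPDFReal_mul, lintegral_mul_const _ (by fun_prop),
          lintegral_invGenGammaPDFReal hτ hsum hS, one_mul]

lemma map_rpow_pi_gammaMeasure {ι : Type*} [Fintype ι] {α β : ι → ℝ} (hτ : 0 < τ)
    (hα : ∀ j, 0 < α j) (hβ : ∀ j, 0 < β j) :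
    (Measure.pi fun j => gammaMeasure (α j) (β j)).map (fun g j => g j ^ (-τ⁻¹)) =
      volume.withDensity fun x =>
        ENNReal.ofReal (∏ j, invGenGammaPDFReal τ (α j) (β j) (x j)) := by
  have (j : ι) : SigmaFinite ((gammaMeasure (α j) (β j)).map (· ^ (-τ⁻¹))) := by
    rw [map_rpow_gammaMeasure hτ]
    infer_instance
  rw [Measure.pi_map_pi (f := fun _ x => x ^ (-τ⁻¹)) fun j => by fun_prop]
  simp only [map_rpow_gammaMeasure hτ]
  exact pi_withDensity_ofReal (fun j => integrable_invGenGammaPDFReal hτ (hα j) (hβ j))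
    fun j => invGenGammaPDFReal_nonneg hτ (hα j) (hβ j)

theorem map_simplexClosure_rpow_pi_gammaMeasure (hτ : 0 < τ) (hα : ∀ j, 0 < α j)
    (hβ : ∀ j, 0 < β j) :
    (Measure.pi fun j => gammaMeasure (α j) (β j)).map
        (fun g => simplexClosure fun j => g j ^ (-τ⁻¹)) =
      inverseSchlomilchMeasure (n + 1) α β τ := by
  set p : (Fin (n + 1) → ℝ) → ℝ := fun x => ∏ j, invGenGammaPDFReal τ (α j) (β j) (x j)
  have hp_meas : Measurable p := by fun_prop
  have hp_support : (fun x => ENNReal.ofReal (p x)).support ⊆ Set.Ici 0 := fun x hx =>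
    Set.mem_Ici.2 fun j => by
      by_contra hj
      have hpx : p x = 0 :=
        prod_eq_zero (mem_univ j) (invGenGammaPDFReal_of_nonpos (not_le.1 hj).le)
      exact hx (by simp only [hpx, ENNReal.ofReal_zero])
  calc (Measure.pi fun j => gammaMeasure (α j) (β j)).map
        (fun g => simplexClosure fun j => g j ^ (-τ⁻¹))
      = (volume.withDensity fun x => ENNReal.ofReal (p x)).map simplexClosure := by
        rw [← map_rpow_pi_gammaMeasure hτ hα hβ, Measure.map_map (by fun_prop) (by fun_prop)]
        rfl
    _ = (simplexMeasure (n + 1)).withDensity fun y => ∫⁻ r in Set.Ioi (0 : ℝ),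
          ENNReal.ofReal (r ^ n) * ENNReal.ofReal (p (r • y)) :=
        map_simplexClosure_withDensity (by fun_prop) hp_support
    _ = inverseSchlomilchMeasure (n + 1) α β τ := by
        refine withDensity_congr_ae ?_
        filter_upwards [ae_mem_stdSimplex] with y hy
        exact lintegral_pow_mul_prod_invGenGammaPDFReal_smul hτ hα hβ hy

lemma isProbabilityMeasure_inverseSchlomilchMeasure (hτ : 0 < τ) (hα : ∀ j, 0 < α j)
    (hβ : ∀ j, 0 < β j) : IsProbabilityMeasure (inverseSchlomilchMeasure (n + 1) α β τ) := by
  have := fun j => isProbabilityMeasure_gammaMeasure (hα j) (hβ j)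
  rw [← map_simplexClosure_rpow_pi_gammaMeasure hτ hα hβ]
  exact Measure.isProbabilityMeasure_map (Measurable.aemeasurable (by fun_prop))

lemma integral_inverseSchlomilchMeasure (hτ : 0 < τ) (hα : ∀ j, 0 < α j) (hβ : ∀ j, 0 < β j)
    (f : (Fin (n + 1) → ℝ) → ℝ) :
    ∫ x, f x ∂inverseSchlomilchMeasure (n + 1) α β τ =
      ∫ x, f x * isDensity (n + 1) α β τ x ∂simplexMeasure (n + 1) := by
  rw [inverseSchlomilchMeasure, integral_withDensity_eq_integral_toReal_smul (by fun_prop)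
    (.of_forall fun _ => ENNReal.ofReal_lt_top)]
  refine integral_congr_ae ?_
  filter_upwards [ae_mem_stdSimplex] with y hy
  rw [ENNReal.toReal_ofReal (isDensity_nonneg hτ hα hβ hy.1), smul_eq_mul, mul_comm]

lemma log_simplexClosure_rpow_div {g : Fin (n + 1) → ℝ} (hg : ∀ j, 0 < g j) (p : ℝ)
    (i k : Fin (n + 1)) :
    Real.log ((simplexClosure fun j => g j ^ p) i / (simplexClosure fun j => g j ^ p) k) =
      p * (Real.log (g i) - Real.log (g k)) := by
  have hpow (j) : 0 < g j ^ p := Real.rpow_pos_of_pos (hg j) p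
  have htotal : 0 < ∑ j, g j ^ p := sum_pos (fun j _ => hpow j) univ_nonempty
  simp only [simplexClosure, Pi.smul_apply, smul_eq_mul]
  rw [mul_div_mul_left _ _ (inv_ne_zero htotal.ne'), Real.log_div (hpow i).ne' (hpow k).ne',
    Real.log_rpow (hg i), Real.log_rpow (hg k), mul_sub]

lemma identDistrib_log_div_inverseSchlomilchMeasure (hτ : 0 < τ) (hα : ∀ j, 0 < α j)
    (hβ : ∀ j, 0 < β j) (i k : Fin (n + 1)) :
    IdentDistrib (fun x => Real.log (x i / x k))
      (fun g => -τ⁻¹ * (Real.log (g i) - Real.log (g k)))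
      (inverseSchlomilchMeasure (n + 1) α β τ)
      (Measure.pi fun j => gammaMeasure (α j) (β j)) := by
  have := fun j => isProbabilityMeasure_gammaMeasure (hα j) (hβ j)
  refine ⟨by fun_prop, by fun_prop, ?_⟩
  rw [← map_simplexClosure_rpow_pi_gammaMeasure hτ hα hβ,
    Measure.map_map (by fun_prop) (by fun_prop)]
  have hpos : ∀ᵐ g ∂Measure.pi fun j => gammaMeasure (α j) (β j), ∀ j, 0 < g j :=
    ae_all_iff.2 fun j => (measurePreserving_eval (fun j => gammaMeasure (α j) (β j)) j
      ).quasiMeasurePreserving.ae (ae_pos_gammaMeasure _ _)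
  refine Measure.map_congr ?_
  filter_upwards [hpos] with g hg
  exact log_simplexClosure_rpow_div hg _ i k

lemma memLp_log_div_inverseSchlomilchMeasure (hτ : 0 < τ) (hα : ∀ j, 0 < α j)
    (hβ : ∀ j, 0 < β j) (i k : Fin (n + 1)) (p : NNReal) :
    MemLp (fun x => Real.log (x i / x k)) p (inverseSchlomilchMeasure (n + 1) α β τ) :=
  (identDistrib_log_div_inverseSchlomilchMeasure hτ hα hβ i k).memLp_iff.2
    (((memLp_log_eval_pi_gammaMeasure hα hβ i p).sub
      (memLp_log_eval_pi_gammaMeasure hα hβ k p)).const_mul _)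

theorem variance_log_div_inverseSchlomilchMeasure (hτ : 0 < τ) (hα : ∀ j, 0 < α j)
    (hβ : ∀ j, 0 < β j) {i k : Fin (n + 1)} (hik : i ≠ k) :
    Var[fun x => Real.log (x i / x k); inverseSchlomilchMeasure (n + 1) α β τ] =
      1 / τ ^ 2 * (trigamma (α i) + trigamma (α k)) := by
  rw [(identDistrib_log_div_inverseSchlomilchMeasure hτ hα hβ i k).variance_eq,
    variance_const_mul, variance_log_sub_log_pi_gammaMeasure hα hβ hik, neg_sq, inv_pow, one_div]

end InverseSchlomilch

/-- Log-ratio variances of the inverse Schlömilch distribution: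
`Var[log(X_i/X_k)] = (1/τ²)(1 − δ_ik)[ψ'(α_i) + ψ'(α_k)]`. -/
theorem is_log_ratio_variance
    (K : ℕ) (hK : 2 ≤ K) (τ : ℝ) (hτ : 0 < τ)
    (α β : Fin K → ℝ) (hα : ∀ i, 0 < α i) (hβ : ∀ i, 0 < β i) (i k : Fin K) :
    (∫ x, Real.log (x i / x k) ^ 2 * isDensity K α β τ x ∂(simplexMeasure K))
      - (∫ x, Real.log (x i / x k) * isDensity K α β τ x ∂(simplexMeasure K)) ^ 2
      = (1 / τ ^ 2) * (1 - kd i k) * (trigamma (α i) + trigamma (α k)) := by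
  obtain ⟨n, rfl⟩ : ∃ n, K = n + 1 := ⟨K - 1, by lia⟩
  have := isProbabilityMeasure_inverseSchlomilchMeasure hτ hα hβ
  calc _ = Var[fun x => Real.log (x i / x k); inverseSchlomilchMeasure (n + 1) α β τ] := by
        rw [variance_eq_sub (memLp_log_div_inverseSchlomilchMeasure hτ hα hβ i k 2),
          integral_inverseSchlomilchMeasure hτ hα hβ, integral_inverseSchlomilchMeasure hτ hα hβ]
        simp only [Pi.pow_apply]
    _ = (1 / τ ^ 2) * (1 - kd i k) * (trigamma (α i) + trigamma (α k)) := by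
        obtain rfl | hik := eq_or_ne i k
        · have hlog (x : Fin (n + 1) → ℝ) : Real.log (x i / x i) = 0 := by
            obtain hx | hx := eq_or_ne (x i) 0 <;> simp [hx]
          simp only [hlog, kd, if_true, sub_self, mul_zero, zero_mul]
          exact variance_zero _
        · rw [variance_log_div_inverseSchlomilchMeasure hτ hα hβ hik, kd, if_neg hik, sub_zero,
            mul_one]
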